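/- arXiv:2003.02521 — 2 statements merged into one kernel-verified Lean document; each statement's English description precedes it below -/
import Mathlib

section
/- (Weak-Soundness Transitivity) Assume Σ_UID^rev and Σ_UFD are reversible (in particular Σ_UID^rev is transitively closed and closed under reverses). If I' is a weakly-sound superinstance of I (for Σ_UID^rev and I), and I is a weakly-sound superinstance of I₀ (for Σ_UID^rev and I₀), then I' is a weakly-sound superinstance of I₀ (for Σ_UID^rev and I₀). -/
namespace FQA

/-- A relational signature: a finite set of relation names, each with an arity `≥ 1`. -/
structure Sig where
  Rel : Type
  rel_fin : Finite Rel
  ar : Rel → ℕ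
  ar_pos : ∀ R, 1 ≤ ar R

/-- The positions of a signature: pairs of a relation and an index into its arity. -/
abbrev Sig.Pos (σ : Sig) : Type := Σ R : σ.Rel, Fin (σ.ar R)

/-- A fact `R(a₁, …, a_{ar R})` with elements from `α`. -/
abbrev Fact (σ : Sig) (α : Type) : Type := Σ R : σ.Rel, Fin (σ.ar R) → α

/-- An instance is a set of facts. -/
abbrev Inst (σ : Sig) (α : Type) : Type := Set (Fact σ α)

variable {σ : Sig} {α β : Type}

/-- Element `a` occurs at position `p` in some fact of the instance `I`. -/
def occursAt (I : Inst σ α) (p : σ.Pos) (a : α) : Prop :=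
  ∃ t : Fin (σ.ar p.1) → α, (⟨p.1, t⟩ : Fact σ α) ∈ I ∧ t p.2 = a

/-- The active domain of an instance: the elements occurring in some fact. -/
def activeDom (I : Inst σ α) : Set α :=
  {a | ∃ F : Fact σ α, F ∈ I ∧ ∃ i, F.2 i = a}

/-- A unary inclusion dependency `src ⊆ dst` (nontrivial: `src ≠ dst`). -/
structure UID (σ : Sig) where
  src : σ.Pos
  dst : σ.Pos
  ne : src ≠ dst

/-- The reverse of a UID. -/
def UID.rev (τ : UID σ) : UID σ := ⟨τ.dst, τ.src, τ.ne.symm⟩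

/-- An instance satisfies a UID if every element occurring at `src` also occurs at `dst`. -/
def satUID (I : Inst σ α) (τ : UID σ) : Prop :=
  ∀ a, occursAt I τ.src a → occursAt I τ.dst a

/-- A unary functional dependency `R^src → R^dst` (nontrivial: `src ≠ dst`). -/
structure UFD (σ : Sig) where
  rel : σ.Rel
  src : Fin (σ.ar rel)
  dst : Fin (σ.ar rel)
  ne : src ≠ dst

/-- The reverse of a UFD. -/
def UFD.rev (φ : UFD σ) : UFD σ := ⟨φ.rel, φ.dst, φ.src, φ.ne.symm⟩

/-- The source position of a UFD, as a position of the signature. -/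
def UFD.posSrc (φ : UFD σ) : σ.Pos := ⟨φ.rel, φ.src⟩

/-- The target position of a UFD, as a position of the signature. -/
def UFD.posDst (φ : UFD σ) : σ.Pos := ⟨φ.rel, φ.dst⟩

/-- An instance satisfies a UFD if any two facts of `rel` agreeing at `src` agree at `dst`. -/
def satUFD (I : Inst σ α) (φ : UFD σ) : Prop :=
  ∀ t u : Fin (σ.ar φ.rel) → α,
    (⟨φ.rel, t⟩ : Fact σ α) ∈ I → (⟨φ.rel, u⟩ : Fact σ α) ∈ I →
    t φ.src = u φ.src → t φ.dst = u φ.dst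

/-- `a` wants to appear at position `p` in `I` (with respect to the UIDs `Su`): some
UID of `Su` with target `p` applies to `a`, and `a` does not yet occur at `p`. -/
def wants (Su : Set (UID σ)) (I : Inst σ α) (p : σ.Pos) (a : α) : Prop :=
  (∃ τ ∈ Su, τ.dst = p ∧ occursAt I τ.src a) ∧ ¬ occursAt I p a

/-- `I` is a weakly-sound superinstance of `I₀` for the UIDs `Su`: elements of `I₀`
only appear at positions where they already appeared or wanted to appear, and new
elements only appear at positions related by UIDs of `Su` in both directions. -/
def WeaklySound (Su : Set (UID σ)) (I₀ I : Inst σ ℕ) : Prop :=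
  (∀ a ∈ activeDom I₀, ∀ p : σ.Pos, occursAt I p a →
      occursAt I₀ p a ∨ wants Su I₀ p a) ∧
  (∀ a ∈ activeDom I, a ∉ activeDom I₀ → ∀ p q : σ.Pos,
      occursAt I p a → occursAt I q a →
      p = q ∨ ∃ h : p ≠ q, (⟨p, q, h⟩ : UID σ) ∈ Su ∧ (⟨q, p, h.symm⟩ : UID σ) ∈ Su)

/-- A set of UIDs is transitively closed. -/
def TransClosedUID (Su : Set (UID σ)) : Prop :=
  ∀ τ ∈ Su, ∀ τ' ∈ Su, τ.dst = τ'.src →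
    ∀ h : τ.src ≠ τ'.dst, (⟨τ.src, τ'.dst, h⟩ : UID σ) ∈ Su

/-- A set of UFDs is closed under UFD transitivity. -/
def TransClosedUFD (Sf : Set (UFD σ)) : Prop :=
  ∀ (R : σ.Rel) (i j k : Fin (σ.ar R)) (h1 : i ≠ j) (h2 : j ≠ k) (h3 : i ≠ k),
    (⟨R, i, j, h1⟩ : UFD σ) ∈ Sf → (⟨R, j, k, h2⟩ : UFD σ) ∈ Sf →
    (⟨R, i, k, h3⟩ : UFD σ) ∈ Sf

/-- A position occurs in some UID of `Su`. -/
def occursInUIDs (Su : Set (UID σ)) (p : σ.Pos) : Prop :=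
  ∃ τ ∈ Su, τ.src = p ∨ τ.dst = p

/-- The UIDs `Su` and UFDs `Sf` are reversible: both are closed under implication
(transitivity), every UID of `Su` has its reverse in `Su`, and every UFD of `Sf`
whose two positions occur in UIDs of `Su` has its reverse in `Sf`. -/
def Reversible (Su : Set (UID σ)) (Sf : Set (UFD σ)) : Prop :=
  TransClosedUID Su ∧ TransClosedUFD Sf ∧
  (∀ τ ∈ Su, τ.rev ∈ Su) ∧
  (∀ φ ∈ Sf, occursInUIDs Su φ.posSrc → occursInUIDs Su φ.posDst → φ.rev ∈ Sf)

/-!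
The reflexive closure of the UIDs is an equivalence relation on positions. Weak soundness says that
an old element only occurs at positions equivalent to one of its old positions, and that all
positions of a new element are equivalent. Every position in `I'` of an element of `I` can thus be
traced back to an equivalent position in `I`. The delicate case is an element of `I` outside `I₀`:
tracing two of its positions in `I'` back to `I`, where it is new, shows that they are equivalent.
-/

/-- The reflexive closure of the set `Su` of UIDs, as a relation on positions: `p = q`, or the UID
`p ⊆ q` is in `Su`. It absorbs the case `p = q`, which `UID` excludes. -/
def EntailsUID (Su : Set (UID σ)) (p q : σ.Pos) : Prop :=
  p = q ∨ ∃ h : p ≠ q, (⟨p, q, h⟩ : UID σ) ∈ Su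

section

variable {Su : Set (UID σ)} {p q r : σ.Pos}

theorem EntailsUID.trans (hT : TransClosedUID Su) (hpq : EntailsUID Su p q)
    (hqr : EntailsUID Su q r) : EntailsUID Su p r := by
  rcases hpq with rfl | ⟨hne_pq, hpq⟩
  · exact hqr
  rcases hqr with rfl | ⟨hne_qr, hqr⟩
  · exact Or.inr ⟨hne_pq, hpq⟩
  · exact or_iff_not_imp_left.2 fun hne => ⟨hne, hT _ hpq _ hqr rfl hne⟩

theorem EntailsUID.symm (hR : ∀ τ ∈ Su, τ.rev ∈ Su) (hpq : EntailsUID Su p q) :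
    EntailsUID Su q p :=
  hpq.imp Eq.symm fun ⟨hne, hmem⟩ => ⟨hne.symm, hR _ hmem⟩

theorem entailsUID_iff_eq_or_mem_and_mem (hR : ∀ τ ∈ Su, τ.rev ∈ Su) :
    EntailsUID Su p q ↔
      p = q ∨ ∃ h : p ≠ q, (⟨p, q, h⟩ : UID σ) ∈ Su ∧ (⟨q, p, h.symm⟩ : UID σ) ∈ Su :=
  or_congr_right <| exists_congr fun _ => (and_iff_left_of_imp (hR _)).symm

end

theorem activeDom_mono {I J : Inst σ α} (hIJ : I ⊆ J) : activeDom I ⊆ activeDom J :=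
  fun _ ⟨F, hF, hi⟩ => ⟨F, hIJ hF, hi⟩

theorem occursAt.mem_activeDom {I : Inst σ α} {p : σ.Pos} {a : α} (h : occursAt I p a) :
    a ∈ activeDom I :=
  let ⟨t, ht, hta⟩ := h
  ⟨⟨p.1, t⟩, ht, p.2, hta⟩

theorem occursAt_or_wants_iff {Su : Set (UID σ)} {I : Inst σ α} {p : σ.Pos} {a : α} :
    occursAt I p a ∨ wants Su I p a ↔ ∃ q, occursAt I q a ∧ EntailsUID Su q p := by
  constructor
  · rintro (hp | ⟨⟨τ, hτ, rfl, hsrc⟩, -⟩)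
    · exact ⟨p, hp, Or.inl rfl⟩
    · exact ⟨τ.src, hsrc, Or.inr ⟨τ.ne, hτ⟩⟩
  · rintro ⟨q, hq, rfl | ⟨hne, hmem⟩⟩
    · exact Or.inl hq
    · exact or_iff_not_imp_left.2 fun hp => ⟨⟨_, hmem, rfl, hq⟩, hp⟩

theorem weaklySound_iff {Su : Set (UID σ)} (hR : ∀ τ ∈ Su, τ.rev ∈ Su) {I₀ I : Inst σ ℕ} :
    WeaklySound Su I₀ I ↔
      (∀ a ∈ activeDom I₀, ∀ p, occursAt I p a → ∃ q, occursAt I₀ q a ∧ EntailsUID Su q p) ∧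
      (∀ a ∉ activeDom I₀, ∀ p q, occursAt I p a → occursAt I q a → EntailsUID Su p q) := by
  simp only [WeaklySound, occursAt_or_wants_iff, ← entailsUID_iff_eq_or_mem_and_mem hR]
  exact and_congr_right fun _ =>
    ⟨fun h a ha p q hp hq => h a hp.mem_activeDom ha p q hp hq, fun h a _ ha => h a ha⟩

/-- **Weak-Soundness Transitivity.** For reversible UIDs `Su` and UFDs `Sf`, if `I'`
is a weakly-sound superinstance of `I` and `I` is a weakly-sound superinstance of
`I₀` (both for `Su`), then `I'` is a weakly-sound superinstance of `I₀`. -/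
theorem weak_soundness_transitivity
    {σ : Sig} (Su : Set (UID σ)) (Sf : Set (UFD σ))
    (hrev : Reversible Su Sf)
    (I₀ I I' : Inst σ ℕ)
    (h01 : I₀ ⊆ I) (h12 : I ⊆ I')
    (hws' : WeaklySound Su I I') (hws : WeaklySound Su I₀ I) :
    I₀ ⊆ I' ∧ WeaklySound Su I₀ I' := by
  obtain ⟨hT, -, hR, -⟩ := hrev
  rw [weaklySound_iff hR] at hws hws' ⊢
  obtain ⟨old, new⟩ := hws
  obtain ⟨old', new'⟩ := hws'
  refine ⟨h01.trans h12, fun a ha p hp => ?_, fun a ha p q hp hq => ?_⟩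
  · obtain ⟨q, hq, hqp⟩ := old' a (activeDom_mono h01 ha) p hp
    obtain ⟨r, hr, hrq⟩ := old a ha q hq
    exact ⟨r, hr, hrq.trans hT hqp⟩
  · by_cases haI : a ∈ activeDom I
    · obtain ⟨p', hp', hp'p⟩ := old' a haI p hp
      obtain ⟨q', hq', hq'q⟩ := old' a haI q hq
      have hp'q' : EntailsUID Su p' q' := new a ha p' q' hp' hq'
      exact ((hp'p.symm hR).trans hT hp'q').trans hT hq'q
    · exact new' a haI p q hp hq

end FQA
end

section
/- (Pointed query normal form) For any connected Boolean acyclic conjunctive query (ACQ) q and any variable x of q, there exists a pointed query q' with free variable x whose total number of atoms equals |q|, such that for every instance I, I ⊨ q if and only if I ⊨ ∃x q'(x). -/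
namespace FQA

variable {σ : Sig} {α β : Type}

/-- A Boolean conjunctive query: existentially quantified variables `Fin nv` and a
conjunction (list) of constant-free atoms, in which every variable occurs. -/
structure CQ (σ : Sig) where
  nv : ℕ
  atoms : List (Fact σ (Fin nv))
  vars_occur : ∀ x : Fin nv, ∃ A ∈ atoms, ∃ i, A.2 i = x

/-- The size of a CQ: its number of atoms. -/
def CQ.size (q : CQ σ) : ℕ := q.atoms.length

/-- A Boolean CQ holds in an instance iff there is a homomorphism (a match) from its
atoms to facts of the instance. -/
def satCQ (I : Inst σ α) (q : CQ σ) : Prop :=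
  ∃ h : Fin q.nv → α, ∀ A ∈ q.atoms, (⟨A.1, fun i => h (A.2 i)⟩ : Fact σ α) ∈ I

/-- A Berge cycle of a CQ: `m + 2 ≥ 2` pairwise distinct atom occurrences and pairwise
distinct variables, cyclically incident. -/
def HasBergeCycle (q : CQ σ) : Prop :=
  ∃ m : ℕ, ∃ A : Fin (m + 2) → Fin q.atoms.length, Function.Injective A ∧
    ∃ x : Fin (m + 2) → Fin q.nv, Function.Injective x ∧
      ∀ i : Fin (m + 2),
        (∃ a, (q.atoms.get (A i)).2 a = x i) ∧
        (∃ a, (q.atoms.get (A (i + 1))).2 a = x i)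

/-- An acyclic CQ (ACQ): no Berge cycle and no variable occurring twice in one atom. -/
def IsACQ (q : CQ σ) : Prop :=
  ¬ HasBergeCycle q ∧ ∀ A ∈ q.atoms, Function.Injective A.2

/-- `q` is connected: its atoms cannot be partitioned into two nonempty sets sharing
no variable. -/
def Connected (q : CQ σ) : Prop :=
  ∀ S : Set (Fin q.atoms.length), S.Nonempty → Sᶜ.Nonempty →
    ∃ i ∈ S, ∃ j ∈ Sᶜ, ∃ x : Fin q.nv,
      (∃ a, (q.atoms.get i).2 a = x) ∧ (∃ a, (q.atoms.get j).2 a = x)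

/-- Pointed queries with one (implicit) free variable: either the empty, tautological
query, or a conjunction of branches `∃ ȳ (A(x, ȳ) ∧ ⋀ⱼ qⱼ(yⱼ))`, where the branch
`PQ.cons R p sub rest` stands for an `R`-atom with the free variable at position `p`,
fresh pairwise distinct variables at the other positions, a pointed subquery `sub i`
attached to the variable at each position `i ≠ p`, and further branches `rest`. -/
inductive PQ (σ : Sig) : Type
  | nil : PQ σ
  | cons (R : σ.Rel) (p : Fin (σ.ar R)) (sub : Fin (σ.ar R) → PQ σ) (rest : PQ σ) : PQ σ

/-- The size of a pointed query: its total number of atoms, including subqueries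
(subqueries attached at the distinguished position `p` are ignored). -/
def PQ.size {σ : Sig} : PQ σ → ℕ
  | .nil => 0
  | .cons R p sub rest =>
      1 + (∑ i : Fin (σ.ar R), if i = p then 0 else (sub i).size) + rest.size

/-- Satisfaction of a pointed query at an element `a` of an instance. -/
def PQ.sat {σ : Sig} (I : Inst σ ℕ) : PQ σ → ℕ → Prop
  | .nil, _ => True
  | .cons R p sub rest, a =>
      (∃ t : Fin (σ.ar R) → ℕ, (⟨R, t⟩ : Fact σ ℕ) ∈ I ∧ t p = a ∧
        ∀ i : Fin (σ.ar R), i ≠ p → PQ.sat I (sub i) (t i)) ∧ PQ.sat I rest a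

/-!
Distinct positions of an atom `A` of an acyclic query are not connected by the other atoms: a
shortest connection would close up with `A` to a Berge cycle. Hence, if `x` occurs in `A`, removing
`A` splits the component of `x` into one component for each position of `A`. By induction each of
them is a pointed query rooted at the variable at that position, and the pointed queries combine at
`A`; matches of the pieces glue since the pieces share no variables.
-/

/-- The atom of `q` with index `B`; atoms are referred to by index because `q.atoms` may contain
repetitions, which count separately in `q.size`. -/
abbrev CQ.atom (q : CQ σ) (B : Fin q.atoms.length) : Fact σ (Fin q.nv) := q.atoms.get B

/-- The set of variables of an atom. -/
abbrev CQ.vars (q : CQ σ) (B : Fin q.atoms.length) : Set (Fin q.nv) := Set.range (q.atom B).2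

/-- The Gaifman graph of the subquery of `q` with atoms `S`: two distinct variables are adjacent
when they occur together in an atom of `S`. -/
def CQ.gaifmanGraph (q : CQ σ) (S : Finset (Fin q.atoms.length)) : SimpleGraph (Fin q.nv) where
  Adj v w := v ≠ w ∧ ∃ B ∈ S, v ∈ q.vars B ∧ w ∈ q.vars B
  symm := ⟨fun _ _ ⟨hne, B, hB, hv, hw⟩ => ⟨hne.symm, B, hB, hw, hv⟩⟩
  loopless := ⟨fun _ h => h.1 rfl⟩

open Classical in
/-- The atoms of the connected component of the variable `x` in the subquery of `q` with
atoms `S`. It is empty when `x` does not occur in `S`. -/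
noncomputable def CQ.component (q : CQ σ) (S : Finset (Fin q.atoms.length)) (x : Fin q.nv) :
    Finset (Fin q.atoms.length) :=
  {B ∈ S | ∃ v ∈ q.vars B, (q.gaifmanGraph S).Reachable x v}

/-- `h` is a homomorphism to the instance `I` from the subquery of `q` with atoms `S`. -/
def CQ.IsMatch (q : CQ σ) (I : Inst σ α) (S : Finset (Fin q.atoms.length))
    (h : Fin q.nv → α) : Prop :=
  ∀ B ∈ S, (⟨(q.atom B).1, h ∘ (q.atom B).2⟩ : Fact σ α) ∈ I

/-- The pointed query `∃ ȳ (R(x, ȳ) ∧ ⋀ⱼ Qⱼ(yⱼ)) ∧ Qₚ(x)`, with `x` at position `p` of `R`.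
The subquery at `p` is attached as further branches, since `PQ.cons` ignores it there. -/
def PQ.star (R : σ.Rel) (p : Fin (σ.ar R)) (Q : Fin (σ.ar R) → PQ σ) : PQ σ :=
  .cons R p Q (Q p)

namespace PQ

variable {R : σ.Rel} {p : Fin (σ.ar R)} {Q : Fin (σ.ar R) → PQ σ}

theorem size_star : (star R p Q).size = ∑ i, (Q i).size + 1 := by
  have hsum : ∑ i, (if i = p then 0 else (Q i).size) + (Q p).size = ∑ i, (Q i).size := by
    simp only [← Finset.sum_erase_add _ _ (Finset.mem_univ p), if_true, add_zero]
    congr 1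
    exact Finset.sum_congr rfl fun i hi => if_neg (Finset.ne_of_mem_erase hi)
  rw [star, size, ← hsum]
  ring

theorem sat_star {I : Inst σ ℕ} {a : ℕ} :
    (star R p Q).sat I a ↔
      ∃ t : Fin (σ.ar R) → ℕ, (⟨R, t⟩ : Fact σ ℕ) ∈ I ∧ t p = a ∧ ∀ i, (Q i).sat I (t i) := by
  rw [star, sat]
  constructor
  · rintro ⟨⟨t, ht, rfl, hsub⟩, hp⟩
    refine ⟨t, ht, rfl, fun i => ?_⟩
    obtain rfl | hi := eq_or_ne i p
    exacts [hp, hsub i hi]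
  · rintro ⟨t, ht, rfl, hsub⟩
    exact ⟨⟨t, ht, rfl, fun i _ => hsub i⟩, hsub p⟩

end PQ

theorem dist_getVert_of_length_eq_dist {V : Type*} {G : SimpleGraph V} {u v : V} {w : G.Walk u v}
    (hw : w.length = G.dist u v) {k : ℕ} (hk : k ≤ w.length) : G.dist u (w.getVert k) = k := by
  rw [← SimpleGraph.length_eq_dist_of_subwalk hw (w.isSubwalk_take k), w.take_length,
    min_eq_left hk]

namespace CQ

variable {q : CQ σ} {S : Finset (Fin q.atoms.length)} {A B : Fin q.atoms.length}
  {u v w x : Fin q.nv}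

theorem gaifmanGraph_mono {T : Finset (Fin q.atoms.length)} (hST : S ⊆ T) :
    q.gaifmanGraph S ≤ q.gaifmanGraph T :=
  fun _ _ ⟨hne, B, hB, hv, hw⟩ => ⟨hne, B, hST hB, hv, hw⟩

theorem reachable_of_mem_vars (hB : B ∈ S) (hv : v ∈ q.vars B) (hw : w ∈ q.vars B) :
    (q.gaifmanGraph S).Reachable v w := by
  obtain rfl | hne := eq_or_ne v w
  · exact .rfl
  · exact SimpleGraph.Adj.reachable ⟨hne, B, hB, hv, hw⟩

theorem dist_le_dist_add_one_of_mem_vars (hB : B ∈ S) (hv : v ∈ q.vars B) (hw : w ∈ q.vars B) :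
    (q.gaifmanGraph S).dist u w ≤ (q.gaifmanGraph S).dist u v + 1 := by
  obtain rfl | hne := eq_or_ne v w
  · exact Nat.le_succ _
  · have hadj : (q.gaifmanGraph S).Adj v w := ⟨hne, B, hB, hv, hw⟩
    have := hadj.diff_dist_adj (u := u)
    omega

-- A walk of minimal length works: the distance from `v` separates its vertices, and grows by at
-- most one within an atom, so that no atom can serve two steps.
theorem exists_bergePath_of_reachable (h : (q.gaifmanGraph S).Reachable v w) :
    ∃ (n : ℕ) (y : Fin (n + 1) → Fin q.nv) (B : Fin n → Fin q.atoms.length),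
      y 0 = v ∧ y (Fin.last n) = w ∧ y.Injective ∧ B.Injective ∧
        ∀ k, B k ∈ S ∧ y k.castSucc ∈ q.vars (B k) ∧ y k.succ ∈ q.vars (B k) := by
  obtain ⟨walk, hwalk⟩ := h.exists_walk_length_eq_dist
  let y : Fin (walk.length + 1) → Fin q.nv := fun k => walk.getVert k
  have hdist (k) : (q.gaifmanGraph S).dist v (y k) = k :=
    dist_getVert_of_length_eq_dist hwalk (Nat.le_of_lt_succ k.isLt)
  have hadj (k : Fin walk.length) : (q.gaifmanGraph S).Adj (y k.castSucc) (y k.succ) :=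
    walk.adj_getVert_succ k.isLt
  choose B hB using fun k => (hadj k).2
  have le_of_atom_eq (i j) (hij : B i = B j) : j ≤ i := by
    have := dist_le_dist_add_one_of_mem_vars (u := v) (hB i).1 (hB i).2.1 (hij ▸ (hB j).2.2)
    rw [hdist, hdist, Fin.val_succ, Fin.val_castSucc] at this
    exact Fin.le_def.2 (Nat.le_of_succ_le_succ this)
  exact ⟨walk.length, y, B, walk.getVert_zero, walk.getVert_length,
    fun i j hij => Fin.ext (by rw [← hdist i, hij, hdist j]),
    fun i j hij => le_antisymm (le_of_atom_eq j i hij.symm) (le_of_atom_eq i j hij), hB⟩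

theorem hasBergeCycle_of_reachable (hA : A ∉ S) (hne : v ≠ w) (hv : v ∈ q.vars A)
    (hw : w ∈ q.vars A) (h : (q.gaifmanGraph S).Reachable v w) : HasBergeCycle q := by
  obtain ⟨n, y, B, rfl, rfl, hy, hBinj, hB⟩ := exists_bergePath_of_reachable h
  obtain _ | m := n
  · exact absurd rfl hne
  have hAB : A ∉ Set.range B := by
    rintro ⟨k, rfl⟩
    exact hA (hB k).1
  refine ⟨m, Fin.cons A B, Fin.cons_injective_iff.2 ⟨hAB, hBinj⟩, y, hy, fun i => ⟨?_, ?_⟩⟩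
  · cases i using Fin.cases with
    | zero => exact hv
    | succ k => exact (hB k).2.2
  · cases i using Fin.lastCases with
    | last => rwa [Fin.last_add_one, Fin.cons_zero]
    | cast k => rw [Fin.coeSucc_eq_succ, Fin.cons_succ]; exact (hB k).2.1

theorem mem_component :
    B ∈ q.component S x ↔ B ∈ S ∧ ∃ v ∈ q.vars B, (q.gaifmanGraph S).Reachable x v := by
  classical exact Finset.mem_filter

theorem component_subset : q.component S x ⊆ S := by
  classical exact Finset.filter_subset _ _

theorem reachable_of_mem_component (hB : B ∈ q.component S x) (hw : w ∈ q.vars B) :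
    (q.gaifmanGraph S).Reachable x w := by
  obtain ⟨hBS, v, hv, hxv⟩ := mem_component.1 hB
  exact hxv.trans (reachable_of_mem_vars hBS hv hw)

theorem disjoint_component (h : ¬ (q.gaifmanGraph S).Reachable u v) :
    Disjoint (q.component S u) (q.component S v) := by
  refine Finset.disjoint_left.2 fun B hBu hBv => h ?_
  obtain ⟨-, w, hw, huw⟩ := mem_component.1 hBu
  exact huw.trans (reachable_of_mem_component hBv hw).symm

theorem component_eq_empty (hx : ∀ B ∈ S, x ∉ q.vars B) : q.component S x = ∅ := by
  refine Finset.eq_empty_of_forall_notMem fun B hB => ?_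
  obtain ⟨hBS, v, hv, ⟨walk⟩⟩ := mem_component.1 hB
  cases walk with
  | nil => exact hx B hBS hv
  | cons hadj _ =>
    obtain ⟨-, C, hC, hxC, -⟩ := hadj
    exact hx C hC hxC

theorem exists_mem_vars_reachable_erase (hx : x ∈ q.vars A)
    (h : (q.gaifmanGraph S).Reachable x v) :
    ∃ w ∈ q.vars A, (q.gaifmanGraph (S.erase A)).Reachable w v := by
  rw [SimpleGraph.reachable_iff_reflTransGen] at h
  induction h with
  | refl => exact ⟨x, hx, .rfl⟩
  | @tail b c _ hbc ih =>
    obtain ⟨-, C, hC, hb, hc⟩ := hbc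
    obtain rfl | hCA := eq_or_ne C A
    · exact ⟨c, hc, .rfl⟩
    · obtain ⟨w, hw, hwb⟩ := ih
      exact ⟨w, hw, hwb.trans (reachable_of_mem_vars (Finset.mem_erase.2 ⟨hCA, hC⟩) hb hc)⟩

theorem component_eq_insert_biUnion (hA : A ∈ S) (hx : x ∈ q.vars A) :
    q.component S x =
      insert A (Finset.univ.biUnion fun i => q.component (S.erase A) ((q.atom A).2 i)) := by
  ext B
  simp only [Finset.mem_insert, Finset.mem_biUnion, Finset.mem_univ, true_and, mem_component]
  constructor
  · rintro ⟨hB, v, hv, hxv⟩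
    obtain ⟨_, ⟨i, rfl⟩, hiv⟩ := exists_mem_vars_reachable_erase hx hxv
    exact or_iff_not_imp_left.2 fun hBA => ⟨i, Finset.mem_erase.2 ⟨hBA, hB⟩, v, hv, hiv⟩
  · rintro (rfl | ⟨i, hB, v, hv, hiv⟩)
    · exact ⟨hA, x, hx, .rfl⟩
    · have hxi := reachable_of_mem_vars hA hx (Set.mem_range_self i)
      exact ⟨Finset.mem_of_mem_erase hB, v, hv,
        hxi.trans (hiv.mono (gaifmanGraph_mono (S.erase_subset A)))⟩

theorem isMatch_insert {I : Inst σ α} {h : Fin q.nv → α} :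
    q.IsMatch I (insert A S) h ↔
      (⟨(q.atom A).1, h ∘ (q.atom A).2⟩ : Fact σ α) ∈ I ∧ q.IsMatch I S h :=
  Finset.forall_mem_insert _ _ _

theorem isMatch_biUnion {ι : Type*} {s : Finset ι} {T : ι → Finset (Fin q.atoms.length)}
    {I : Inst σ α} {h : Fin q.nv → α} :
    q.IsMatch I (s.biUnion T) h ↔ ∀ i ∈ s, q.IsMatch I (T i) h := by
  simp only [IsMatch, Finset.mem_biUnion]
  grind

theorem isMatch_congr {I : Inst σ α} {h h' : Fin q.nv → α}
    (hh : ∀ B ∈ S, ∀ v ∈ q.vars B, h v = h' v) : q.IsMatch I S h ↔ q.IsMatch I S h' := by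
  refine forall₂_congr fun B hB => ?_
  rw [show h ∘ (q.atom B).2 = h' ∘ (q.atom B).2 from funext fun i => hh B hB _ ⟨i, rfl⟩]

theorem exists_isMatch_of_forall_component {ι : Type*} [Nonempty α] {I : Inst σ α}
    {y : ι → Fin q.nv} (hy : ∀ i j, (q.gaifmanGraph S).Reachable (y i) (y j) → i = j)
    {H : ι → Fin q.nv → α} (hH : ∀ i, q.IsMatch I (q.component S (y i)) (H i)) :
    ∃ h : Fin q.nv → α, (∀ i, h (y i) = H i (y i)) ∧
      ∀ i, q.IsMatch I (q.component S (y i)) h := by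
  have hglue (v) : ∃ a, ∀ i, (q.gaifmanGraph S).Reachable (y i) v → a = H i v := by
    by_cases hv : ∃ i, (q.gaifmanGraph S).Reachable (y i) v
    · obtain ⟨i, hi⟩ := hv
      exact ⟨H i v, fun j hj => by rw [hy i j (hi.trans hj.symm)]⟩
    · exact ⟨Classical.arbitrary α, fun i hi => absurd ⟨i, hi⟩ hv⟩
  choose h hh using hglue
  refine ⟨h, fun i => hh _ i .rfl, fun i => (isMatch_congr fun B hB v hv => ?_).2 (hH i)⟩
  exact hh v i (reachable_of_mem_component hB hv)

end CQ

namespace IsACQ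

variable {q : CQ σ} {S : Finset (Fin q.atoms.length)} {A : Fin q.atoms.length}

theorem eq_of_reachable_erase (hq : IsACQ q) {i j : Fin (σ.ar (q.atom A).1)}
    (h : (q.gaifmanGraph (S.erase A)).Reachable ((q.atom A).2 i) ((q.atom A).2 j)) : i = j := by
  by_contra hij
  have hne := (hq.2 _ (List.get_mem _ A)).ne hij
  exact hq.1 (CQ.hasBergeCycle_of_reachable (S.notMem_erase A) hne ⟨i, rfl⟩ ⟨j, rfl⟩ h)

theorem card_component (hq : IsACQ q) (hA : A ∈ S) (p : Fin (σ.ar (q.atom A).1)) :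
    (q.component S ((q.atom A).2 p)).card =
      ∑ i, (q.component (S.erase A) ((q.atom A).2 i)).card + 1 := by
  rw [CQ.component_eq_insert_biUnion hA ⟨p, rfl⟩, Finset.card_insert_of_notMem,
    Finset.card_biUnion]
  · exact fun i _ j _ hij => CQ.disjoint_component (mt hq.eq_of_reachable_erase hij)
  · simp only [Finset.mem_biUnion, not_exists, not_and]
    exact fun i _ hi => S.notMem_erase A (CQ.component_subset hi)

theorem exists_isMatch_component_iff [Nonempty α] (hq : IsACQ q) (hA : A ∈ S)
    (p : Fin (σ.ar (q.atom A).1)) (I : Inst σ α) (a : α) :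
    (∃ h, h ((q.atom A).2 p) = a ∧ q.IsMatch I (q.component S ((q.atom A).2 p)) h) ↔
      ∃ t, (⟨(q.atom A).1, t⟩ : Fact σ α) ∈ I ∧ t p = a ∧ ∀ i, ∃ h, h ((q.atom A).2 i) = t i ∧
        q.IsMatch I (q.component (S.erase A) ((q.atom A).2 i)) h := by
  simp only [CQ.component_eq_insert_biUnion hA ⟨p, rfl⟩, CQ.isMatch_insert, CQ.isMatch_biUnion,
    Finset.mem_univ, true_imp_iff]
  constructor
  · rintro ⟨h, ha, hAI, hsub⟩
    exact ⟨h ∘ (q.atom A).2, hAI, ha, fun i => ⟨h, rfl, hsub i⟩⟩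
  · rintro ⟨t, htI, rfl, hsub⟩
    choose H ht hH using hsub
    obtain ⟨h, hhH, hh⟩ :=
      CQ.exists_isMatch_of_forall_component (fun _ _ => hq.eq_of_reachable_erase) hH
    have hht : h ∘ (q.atom A).2 = t := funext fun i => (hhH i).trans (ht i)
    exact ⟨h, congrFun hht p, hht ▸ htI, hh⟩

end IsACQ

theorem Connected.component_univ {q : CQ σ} (hq : Connected q) (x : Fin q.nv) :
    q.component Finset.univ x = Finset.univ := by
  by_contra hne
  obtain ⟨C, hC⟩ : ∃ C, C ∉ q.component Finset.univ x := by
    simpa only [Finset.eq_univ_iff_forall, not_forall] using hne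
  obtain ⟨A, hA, hxA⟩ := q.vars_occur x
  obtain ⟨B, rfl⟩ := List.get_of_mem hA
  have hB : B ∈ q.component Finset.univ x :=
    CQ.mem_component.2 ⟨Finset.mem_univ B, x, hxA, .rfl⟩
  obtain ⟨i, hi, j, hj, y, hyi, hyj⟩ := hq (q.component Finset.univ x) ⟨B, hB⟩ ⟨C, hC⟩
  exact hj (CQ.mem_component.2
    ⟨Finset.mem_univ j, y, hyj, CQ.reachable_of_mem_component hi hyi⟩)

theorem satCQ_iff_exists_isMatch {q : CQ σ} {I : Inst σ α} :
    satCQ I q ↔ ∃ h, q.IsMatch I Finset.univ h := by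
  simp only [satCQ, CQ.IsMatch, List.forall_mem_iff_get, Finset.mem_univ, true_imp_iff]
  rfl

theorem pointed_normal_form_general {q : CQ σ} (hacq : IsACQ q)
    (S : Finset (Fin q.atoms.length)) (x : Fin q.nv) :
    ∃ q' : PQ σ, q'.size = (q.component S x).card ∧
      ∀ (I : Inst σ ℕ) (a : ℕ),
        q'.sat I a ↔ ∃ h, h x = a ∧ q.IsMatch I (q.component S x) h := by
  induction S using Finset.strongInduction generalizing x with
  | H S ih =>
    by_cases hx : ∀ B ∈ S, x ∉ q.vars B
    · rw [CQ.component_eq_empty hx]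
      refine ⟨.nil, rfl, fun I a => iff_of_true trivial ⟨fun _ => a, rfl, ?_⟩⟩
      simp [CQ.IsMatch]
    push Not at hx
    obtain ⟨A, hA, p, rfl⟩ := hx
    choose Q hsize hsat using fun i => ih (S.erase A) (Finset.erase_ssubset hA) ((q.atom A).2 i)
    refine ⟨.star (q.atom A).1 p Q, ?_, fun I a => ?_⟩
    · simp only [PQ.size_star, hsize, hacq.card_component hA]
    · simp only [PQ.sat_star, hsat, hacq.exists_isMatch_component_iff hA]

/-- **Pointed query normal form.** Every connected Boolean acyclic CQ `q` can, for
any of its variables `x`, be rewritten as `∃ x, q'(x)` for a pointed query `q'` with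
the same number of atoms: for every instance, `q` holds iff `∃ a, q'(a)` holds. -/
theorem pointed_normal_form
    {σ : Sig} (q : CQ σ) (hconn : Connected q) (hacq : IsACQ q)
    (x : Fin q.nv) :
    ∃ q' : PQ σ, q'.size = q.size ∧
      ∀ I : Inst σ ℕ, (satCQ I q ↔ ∃ a : ℕ, PQ.sat I q' a) := by
  obtain ⟨q', hsize, hsat⟩ := pointed_normal_form_general hacq Finset.univ x
  rw [hconn.component_univ] at hsize hsat
  exact ⟨q', by simpa [CQ.size] using hsize, fun I => by simp [hsat, satCQ_iff_exists_isMatch]⟩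

end FQA
end
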